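/- Let 0 < k < 3/2, M > 0, and Φ(s) = (k/(1+k)) s^{1+1/k} for s ≥ 0. Then the infimum h_M of the energy–Casimir functional H_C(f) = E_kin(f) + E_pot(f) + C(f) over the constraint set F_M = { f ∈ L¹(ℝ⁶) : f ≥ 0, ∬ f dp dx = M, E_kin(f) + C(f) < ∞ } is finite, i.e. h_M > −∞. Moreover, along any minimizing sequence (f_j) ⊂ F_M of H_C, both E_kin(f_j) and C(f_j) remain bounded. -/

import Mathlib

/-!
The theorem follows from the coercivity estimate `E_kin(f) + C(f) ≤ 2 H_C(f) + const` on `F_M`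
(`exists_energy_le_HC`), that is, from `-E_pot ≤ (E_kin + C)/2 + const`.

Let `n = k + 3/2` and `q = 1 + 1/n`; then `q > 4/3` because `k < 3/2`. Two estimates are combined.

* Interpolation (`exists_spatialDensity_rpow_le`): for every `l ≥ 0`, pointwise
  `l f ≤ |p|² f + f^(1+1/k) + l^(k+1) 1_{|p|² ≤ l}`. Integrating in `p` and choosing `l`
  proportional to `ρ_f^(1/n)` gives `∫ ρ_f^q ≤ const (E_kin + C)`.

* Potential energy (`lintegral_potential_le`): for `ρ ≥ 0` of mass at most `M` and any `η > 0`,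
  `∬ ρ(x) ρ(y) / |x - y| ≤ η ∫ ρ^q + const`. By symmetry only pairs with
  `u = ρ(x) ≥ ρ(y)` matter. Let `r(u) = 1 / (1 + δ u^(q-1))`. Pairs with `|x - y| ≥ r(u)` contribute
  at most `∬ (ρ(x) + δ ρ(x)^q) ρ(y) ≤ M² + δ M ∫ ρ^q`. For the other pairs `ρ(x) ρ(y)` is replaced by
  `ρ(x)²`, and integrating `1 / |x - y|` over `|x - y| < r(u)` leaves a multiple of `∫ ρ² r(ρ)²`,
  which is at most `T M + ε ∫ ρ^q` because `u² r(u)²` grows at most like `u^(4-2q)` and `4 - 2q < q`.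
-/

open MeasureTheory Set Filter Topology
open scoped ENNReal RealInnerProductSpace

noncomputable section

/-- Position/momentum space `ℝ³`. -/
abbrev V3 : Type := EuclideanSpace ℝ (Fin 3)

/-- The spatial density `ρ_f(x) = ∫ f(x,p) dp` induced by a phase-space density. -/
def spatialDensity (f : V3 × V3 → ℝ) (x : V3) : ℝ := ∫ p : V3, f (x, p)

/-- The Casimir function `Φ(s) = (k/(1+k)) s^{1+1/k}`. -/
def PhiFun (k s : ℝ) : ℝ := k / (1 + k) * s ^ (1 + 1 / k)

/-- Kinetic energy `E_kin(f) = (1/2)∬ |p|² f dp dx`, as an extended nonnegative real. -/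
def EkinL (f : V3 × V3 → ℝ) : ℝ≥0∞ :=
  (1 / 2 : ℝ≥0∞) * ∫⁻ z : V3 × V3, ENNReal.ofReal (‖z.2‖ ^ 2 * f z)

/-- Casimir functional `C(f) = ∬ Φ(f) dp dx`, as an extended nonnegative real. -/
def CasL (k : ℝ) (f : V3 × V3 → ℝ) : ℝ≥0∞ :=
  ∫⁻ z : V3 × V3, ENNReal.ofReal (PhiFun k (f z))

/-- Minus the potential energy, `−E_pot(f) = (1/2) ∬ ρ_f(x)ρ_f(y)|x−y|⁻¹ dx dy`,
as an extended nonnegative real. -/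
def EpotL (f : V3 × V3 → ℝ) : ℝ≥0∞ :=
  (1 / 2 : ℝ≥0∞) * ∫⁻ x : V3, ∫⁻ y : V3,
    ENNReal.ofReal (spatialDensity f x * spatialDensity f y / ‖x - y‖)

/-- The energy–Casimir functional `H_C(f) = E_kin(f) + E_pot(f) + C(f)`. -/
def HC (k : ℝ) (f : V3 × V3 → ℝ) : ℝ :=
  (EkinL f).toReal - (EpotL f).toReal + (CasL k f).toReal

/-- The constraint set `F_M`. -/
def FM (k M : ℝ) : Set (V3 × V3 → ℝ) :=
  {f | Measurable f ∧ (∀ z, 0 ≤ f z) ∧ Integrable f volume ∧ (∫ z : V3 × V3, f z) = M ∧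
    EkinL f + CasL k f < ⊤}

/-! ### The truncated Newton kernel -/

/-- The Newton kernel `|z|⁻¹` cut off to the open ball of radius `r`, with value `0` at the
origin. -/
def nkern (r : ℝ) (z : V3) : ℝ := if ‖z‖ < r then ‖z‖⁻¹ else 0

lemma nkern_nonneg (r : ℝ) (z : V3) : 0 ≤ nkern r z := by
  unfold nkern; split_ifs <;> simp

/-- In dimension three `∫_{|z|<r} |z|⁻¹ dz` is at most a constant times `r²`, by polar coordinates. -/
lemma lintegral_nkern_le : ∃ c : ℝ, 0 ≤ c ∧ ∀ r : ℝ, 0 < r →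
    ∫⁻ z : V3, ENNReal.ofReal (nkern r z) ≤ ENNReal.ofReal (c * r ^ 2) := by
  refine ⟨3 * (volume : Measure V3).real (Metric.ball 0 1), by positivity, fun r hr => ?_⟩
  have hEq : EqOn (fun y : ℝ => y ^ (Module.finrank ℝ V3 - 1) • (if y < r then y⁻¹ else 0))
      ((Iio r).indicator (fun y => y)) (Ioi 0) := by
    intro y hy
    have hy' : (0 : ℝ) < y := hy
    by_cases h : y < r
    · simp [h]; field_simp
    · simp [h]
  have hInt : Integrable (fun z : V3 => nkern r z) := by
    refine (integrable_fun_norm_addHaar volume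
      (f := fun y : ℝ => if y < r then y⁻¹ else 0)).2 ?_
    refine IntegrableOn.congr_fun ?_ hEq.symm measurableSet_Ioi
    rw [integrableOn_indicator_iff measurableSet_Iio, inter_comm, Ioi_inter_Iio]
    exact (continuous_id.integrableOn_Icc (a := 0) (b := r)).mono_set Ioo_subset_Icc_self
  rw [← ofReal_integral_eq_lintegral_ofReal hInt
    (Eventually.of_forall (nkern_nonneg r))]
  apply ENNReal.ofReal_le_ofReal
  have h1 := integral_fun_norm_addHaar (volume : Measure V3)
    (fun y : ℝ => if y < r then y⁻¹ else 0)
  have h2 : ∫ z : V3, nkern r z = ∫ z : V3, (fun y : ℝ => if y < r then y⁻¹ else 0) ‖z‖ := rfl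
  rw [h2, h1, setIntegral_congr_fun measurableSet_Ioi hEq, setIntegral_indicator measurableSet_Iio,
    Ioi_inter_Iio, ← integral_Ioc_eq_integral_Ioo, ← intervalIntegral.integral_of_le hr.le,
    integral_id]
  simp only [finrank_euclideanSpace, Fintype.card_fin, nsmul_eq_mul, smul_eq_mul]
  have : 0 ≤ (volume : Measure V3).real (Metric.ball 0 1) * r ^ 2 := by positivity
  push_cast
  nlinarith

/-! ### The potential energy is controlled by a small multiple of `∫ ρ^q` for `q > 4/3` -/

/-- With the density-dependent radius `r(u) = (1 + δ u^(q-1))⁻¹`, the near-field quantity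
`u² r(u)²` is linear in `u` up to an arbitrarily small multiple of `u^q`. For large `u` it is at most
`δ⁻² u^(4-2q)`, and the exponent `4 - 2q` is less than `q` precisely when `q > 4/3`. -/
lemma sq_mul_sq_radius_le {q δ ε : ℝ} (hq : 4 / 3 < q) (hδ : 0 < δ) (hε : 0 < ε) :
    ∃ T : ℝ, 0 ≤ T ∧ ∀ u : ℝ, 0 ≤ u →
      u ^ 2 * ((1 + δ * u ^ (q - 1))⁻¹) ^ 2 ≤ T * u + ε * u ^ q := by
  have hlim : Tendsto (fun x : ℝ => x ^ (-(3 * q - 4))) atTop (𝓝 0) :=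
    tendsto_rpow_neg_atTop (by linarith)
  obtain ⟨T, hT, hT1⟩ := ((hlim.eventually (gt_mem_nhds (show 0 < ε * δ ^ 2 by positivity))).and
    (eventually_ge_atTop 1)).exists
  refine ⟨T, by linarith, fun u hu => ?_⟩
  have huq : 0 ≤ u ^ q := Real.rpow_nonneg hu _
  have hden : 1 ≤ 1 + δ * u ^ (q - 1) := by
    have := Real.rpow_nonneg hu (q - 1)
    nlinarith
  -- Below the threshold `T` the bound `r ≤ 1` suffices; above it, `r ≤ (δ u^(q-1))⁻¹` and the decay
  -- of `u^(4-3q)` beats `ε δ²`.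
  rcases le_total u T with h | h
  · have h1 : ((1 + δ * u ^ (q - 1))⁻¹) ^ 2 ≤ 1 :=
      pow_le_one₀ (by positivity) (inv_le_one_of_one_le₀ hden)
    nlinarith [mul_nonneg hε.le huq, mul_le_mul_of_nonneg_left h1 (sq_nonneg u)]
  · have hu0 : 0 < u := by linarith
    have hp : 0 < u ^ (q - 1) := Real.rpow_pos_of_pos hu0 _
    have h1 : ((1 + δ * u ^ (q - 1))⁻¹) ^ 2 ≤ ((δ * u ^ (q - 1))⁻¹) ^ 2 := by
      gcongr; linarith
    have h2 : u ^ 2 * ((δ * u ^ (q - 1))⁻¹) ^ 2 = (δ ^ 2)⁻¹ * (u ^ (-(3 * q - 4)) * u ^ q) := by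
      rw [mul_inv, mul_pow, ← Real.rpow_neg hu, ← Real.rpow_natCast (u ^ (-(q - 1))),
        ← Real.rpow_mul hu, ← Real.rpow_natCast u 2, ← Real.rpow_add hu0]
      rw [show u ^ ((2 : ℕ) : ℝ) * ((δ⁻¹) ^ 2 * u ^ (-(q - 1) * ((2 : ℕ) : ℝ)))
        = (δ ^ 2)⁻¹ * (u ^ ((2 : ℕ) : ℝ) * u ^ (-(q - 1) * ((2 : ℕ) : ℝ))) by
          rw [inv_pow]; ring, ← Real.rpow_add hu0]
      congr 2
      push_cast; ring
    have h3 : u ^ (-(3 * q - 4)) ≤ ε * δ ^ 2 :=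
      (Real.rpow_le_rpow_of_nonpos (by linarith) h (by linarith)).trans hT.le
    calc u ^ 2 * ((1 + δ * u ^ (q - 1))⁻¹) ^ 2
        ≤ u ^ 2 * ((δ * u ^ (q - 1))⁻¹) ^ 2 := by gcongr
      _ = (δ ^ 2)⁻¹ * (u ^ (-(3 * q - 4)) * u ^ q) := h2
      _ ≤ (δ ^ 2)⁻¹ * ((ε * δ ^ 2) * u ^ q) := by gcongr
      _ = ε * u ^ q := by field_simp
      _ ≤ T * u + ε * u ^ q := by nlinarith

/-- Near/far splitting of the interaction at the radius `r(u) = (1 + δ u^(q-1))⁻¹` attached to the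
larger density `u`: outside this radius `|z|⁻¹ ≤ r(u)⁻¹`, inside it `u v ≤ u²`. -/
lemma mul_div_norm_le_of_le {q δ u v : ℝ} (hq : 1 < q) (hδ : 0 < δ) (hv : 0 ≤ v) (hvu : v ≤ u)
    (z : V3) :
    u * v / ‖z‖ ≤ (u + δ * u ^ q) * v + u ^ 2 * nkern ((1 + δ * u ^ (q - 1))⁻¹) z := by
  have hu : 0 ≤ u := hv.trans hvu
  have hp : 0 ≤ u ^ (q - 1) := Real.rpow_nonneg hu _
  have huq : u * u ^ (q - 1) = u ^ q := by
    conv_lhs => rw [← Real.rpow_one_add' hu (by linarith)]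
    congr 1; ring
  have huq0 : 0 ≤ u ^ q := Real.rpow_nonneg hu _
  unfold nkern
  split_ifs with h
  · have : u * v / ‖z‖ ≤ u ^ 2 * ‖z‖⁻¹ := by
      rw [div_eq_mul_inv]
      gcongr
      nlinarith
    have : 0 ≤ (u + δ * u ^ q) * v := by positivity
    linarith
  · push Not at h
    have hi : ‖z‖⁻¹ ≤ 1 + δ * u ^ (q - 1) := by
      rw [inv_le_comm₀ (lt_of_lt_of_le (by positivity) h) (by positivity)]
      exact h
    calc u * v / ‖z‖ = u * v * ‖z‖⁻¹ := div_eq_mul_inv _ _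
      _ ≤ u * v * (1 + δ * u ^ (q - 1)) := by gcongr
      _ = (u + δ * (u * u ^ (q - 1))) * v := by ring
      _ = _ := by rw [huq]; ring

/-- An elementary substitute for the Hardy–Littlewood–Sobolev inequality: at fixed mass bound `M`,
the self-interaction of `ρ` is at most an arbitrarily small multiple of `∫ ρ^q`, plus a constant. -/
lemma lintegral_potential_le {q M η : ℝ} (hq : 4 / 3 < q) (hM : 0 ≤ M) (hη : 0 < η) :
    ∃ C : ℝ, 0 ≤ C ∧ ∀ ρ : V3 → ℝ, Measurable ρ → (∀ x, 0 ≤ ρ x) →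
      ∫⁻ x, ENNReal.ofReal (ρ x) ≤ ENNReal.ofReal M →
      ∫⁻ x, ∫⁻ y, ENNReal.ofReal (ρ x * ρ y / ‖x - y‖) ≤
        ENNReal.ofReal η * (∫⁻ x, ENNReal.ofReal (ρ x ^ q)) + ENNReal.ofReal C := by
  obtain ⟨c, hc, hker⟩ := lintegral_nkern_le
  set δ : ℝ := η / (4 * (M + 1)) with hδd
  set ε : ℝ := η / (4 * (c + 1)) with hεd
  have hδ : 0 < δ := by positivity
  have hε : 0 < ε := by positivity
  obtain ⟨T, hT, hrad⟩ := sq_mul_sq_radius_le hq hδ hε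
  refine ⟨2 * (M ^ 2 + c * T * M), by positivity, fun ρ hρ hρ0 hmass => ?_⟩
  set I := ∫⁻ x, ENNReal.ofReal (ρ x ^ q) with hI
  let r : V3 → ℝ := fun x => (1 + δ * ρ x ^ (q - 1))⁻¹
  have hr : ∀ x, 0 < r x := fun x => by
    have := Real.rpow_nonneg (hρ0 x) (q - 1)
    positivity
  have hrq : ∀ x, 0 ≤ ρ x ^ q := fun x => Real.rpow_nonneg (hρ0 x) q
  -- `H x y` bounds the interaction of `x` and `y` when `ρ y ≤ ρ x`, so `H x y + H y x` always does.
  let H : V3 → V3 → ℝ≥0∞ := fun x y =>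
    ENNReal.ofReal (ρ x + δ * ρ x ^ q) * ENNReal.ofReal (ρ y) +
      ENNReal.ofReal (ρ x ^ 2) * ENNReal.ofReal (nkern (r x) (x - y))
  have hHm : Measurable (Function.uncurry H) := by
    have hk : Measurable fun w : V3 × V3 => nkern (r w.1) (w.1 - w.2) := by
      unfold nkern
      refine Measurable.ite (measurableSet_lt ?_ ?_) ?_ measurable_const
      · fun_prop
      · fun_prop
      · fun_prop
    change Measurable fun w : V3 × V3 =>
      ENNReal.ofReal (ρ w.1 + δ * ρ w.1 ^ q) * ENNReal.ofReal (ρ w.2) +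
      ENNReal.ofReal (ρ w.1 ^ 2) * ENNReal.ofReal (nkern (r w.1) (w.1 - w.2))
    fun_prop
  have hpt : ∀ x y, ENNReal.ofReal (ρ x * ρ y / ‖x - y‖) ≤ H x y + H y x := by
    have key : ∀ x y, ρ y ≤ ρ x → ENNReal.ofReal (ρ x * ρ y / ‖x - y‖) ≤ H x y := by
      intro x y h
      have h0 : 0 ≤ ρ x + δ * ρ x ^ q := by
        have := hrq x; have := hρ0 x; positivity
      simp only [H]
      rw [← ENNReal.ofReal_mul h0, ← ENNReal.ofReal_mul (sq_nonneg _),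
        ← ENNReal.ofReal_add (mul_nonneg h0 (hρ0 y))
          (mul_nonneg (sq_nonneg _) (nkern_nonneg _ _))]
      exact ENNReal.ofReal_le_ofReal
        (mul_div_norm_le_of_le (by linarith) hδ (hρ0 y) h (x - y))
    intro x y
    rcases le_total (ρ y) (ρ x) with h | h
    · exact (key x y h).trans le_self_add
    · rw [mul_comm (ρ x), norm_sub_rev]
      exact (key y x h).trans le_add_self
  have hA : ∫⁻ x, ENNReal.ofReal (ρ x + δ * ρ x ^ q) ≤ ENNReal.ofReal M + ENNReal.ofReal δ * I := by
    rw [hI, ← lintegral_const_mul _ (by fun_prop)]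
    refine le_trans (le_of_eq ?_) (add_le_add_left hmass _)
    rw [← lintegral_add_left (by fun_prop)]
    refine lintegral_congr fun x => ?_
    rw [ENNReal.ofReal_add (hρ0 x) (mul_nonneg hδ.le (hrq x)), ENNReal.ofReal_mul hδ.le]
  have hB : ∫⁻ x, ENNReal.ofReal (ρ x ^ 2) * ∫⁻ y, ENNReal.ofReal (nkern (r x) (x - y)) ≤
      ENNReal.ofReal c * (ENNReal.ofReal T * ENNReal.ofReal M + ENNReal.ofReal ε * I) := by
    calc ∫⁻ x, ENNReal.ofReal (ρ x ^ 2) * ∫⁻ y, ENNReal.ofReal (nkern (r x) (x - y))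
        ≤ ∫⁻ x, ENNReal.ofReal c *
          (ENNReal.ofReal T * ENNReal.ofReal (ρ x) + ENNReal.ofReal ε * ENNReal.ofReal (ρ x ^ q)) := by
          refine lintegral_mono fun x => ?_
          rw [lintegral_sub_left_eq_self (fun y => ENNReal.ofReal (nkern (r x) y)) x]
          refine (mul_le_mul_right (hker (r x) (hr x)) _).trans ?_
          rw [← ENNReal.ofReal_mul (sq_nonneg _), ← ENNReal.ofReal_mul hT,
            ← ENNReal.ofReal_mul hε.le, ← ENNReal.ofReal_add (mul_nonneg hT (hρ0 x))
              (mul_nonneg hε.le (hrq x)), ← ENNReal.ofReal_mul hc]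
          apply ENNReal.ofReal_le_ofReal
          calc ρ x ^ 2 * (c * r x ^ 2) = c * (ρ x ^ 2 * r x ^ 2) := by ring
            _ ≤ _ := mul_le_mul_of_nonneg_left (hrad _ (hρ0 x)) hc
      _ = ENNReal.ofReal c * (ENNReal.ofReal T * (∫⁻ x, ENNReal.ofReal (ρ x))
            + ENNReal.ofReal ε * I) := by
          rw [lintegral_const_mul _ (by fun_prop), lintegral_add_left (by fun_prop),
            lintegral_const_mul _ (by fun_prop), lintegral_const_mul _ (by fun_prop)]
      _ ≤ _ := by gcongr
  have hkm : ∀ x, Measurable fun y => ENNReal.ofReal (nkern (r x) (x - y)) := by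
    intro x
    unfold nkern
    exact (Measurable.ite (measurableSet_lt (by fun_prop) (by fun_prop)) (by fun_prop)
      measurable_const).ennreal_ofReal
  have hH : ∫⁻ x, ∫⁻ y, H x y ≤ (ENNReal.ofReal M + ENNReal.ofReal δ * I) * ENNReal.ofReal M +
      ENNReal.ofReal c * (ENNReal.ofReal T * ENNReal.ofReal M + ENNReal.ofReal ε * I) := by
    have : ∀ x, ∫⁻ y, H x y = ENNReal.ofReal (ρ x + δ * ρ x ^ q) * (∫⁻ y, ENNReal.ofReal (ρ y)) +
        ENNReal.ofReal (ρ x ^ 2) * ∫⁻ y, ENNReal.ofReal (nkern (r x) (x - y)) := by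
      intro x
      simp only [H]
      rw [lintegral_add_left (by fun_prop), lintegral_const_mul _ (by fun_prop),
        lintegral_const_mul _ (hkm x)]
    simp_rw [this]
    rw [lintegral_add_left (by fun_prop), lintegral_mul_const _ (by fun_prop)]
    gcongr
  have hswap : ∫⁻ x, ∫⁻ y, H y x = ∫⁻ x, ∫⁻ y, H x y :=
    (lintegral_lintegral_swap hHm.aemeasurable).symm
  calc ∫⁻ x, ∫⁻ y, ENNReal.ofReal (ρ x * ρ y / ‖x - y‖)
      ≤ ∫⁻ x, ∫⁻ y, (H x y + H y x) := lintegral_mono fun x => lintegral_mono fun y => hpt x y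
    _ = ∫⁻ x, ((∫⁻ y, H x y) + ∫⁻ y, H y x) :=
        lintegral_congr fun x => lintegral_add_left (hHm.of_uncurry_left) _
    _ = (∫⁻ x, ∫⁻ y, H x y) + ∫⁻ x, ∫⁻ y, H y x :=
        lintegral_add_left hHm.lintegral_prod_right' _
    _ = 2 * ∫⁻ x, ∫⁻ y, H x y := by rw [hswap, two_mul]
    _ ≤ 2 * ((ENNReal.ofReal M + ENNReal.ofReal δ * I) * ENNReal.ofReal M +
      ENNReal.ofReal c * (ENNReal.ofReal T * ENNReal.ofReal M + ENNReal.ofReal ε * I)) := by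
        gcongr
    _ = ENNReal.ofReal (2 * (δ * M + c * ε)) * I
          + ENNReal.ofReal (2 * (M ^ 2 + c * T * M)) := by
        rw [ENNReal.ofReal_mul (by norm_num), ENNReal.ofReal_add (by positivity) (by positivity),
          ENNReal.ofReal_mul hδ.le, ENNReal.ofReal_mul hc, ENNReal.ofReal_mul (by norm_num),
          ENNReal.ofReal_add (by positivity) (by positivity), ENNReal.ofReal_pow hM,
          ENNReal.ofReal_mul (by positivity), ENNReal.ofReal_mul hc, ENNReal.ofReal_ofNat]
        ring
    _ ≤ _ := by
        gcongr
        have h1 : δ * M ≤ η / 4 := by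
          rw [hδd, div_mul_eq_mul_div, div_le_div_iff₀ (by positivity) (by norm_num)]
          nlinarith
        have h2 : c * ε ≤ η / 4 := by
          rw [hεd, mul_div_assoc', div_le_div_iff₀ (by positivity) (by norm_num)]
          nlinarith
        linarith

/-! ### Interpolation: `∫ ρ_f^(1+1/n)` is controlled by the energy, with `n = k + 3/2` -/

lemma spatialDensity_nonneg {f : V3 × V3 → ℝ} (hf0 : ∀ z, 0 ≤ f z) (x : V3) :
    0 ≤ spatialDensity f x :=
  integral_nonneg fun _ => hf0 _

/-- Only an inequality: `spatialDensity f x` is `0` where the fibre of `f` is not integrable. -/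
lemma ofReal_spatialDensity_le {f : V3 × V3 → ℝ} (hf0 : ∀ z, 0 ≤ f z) (x : V3) :
    ENNReal.ofReal (spatialDensity f x) ≤ ∫⁻ p, ENNReal.ofReal (f (x, p)) := by
  have h := enorm_integral_le_lintegral_enorm (μ := (volume : Measure V3)) fun p => f (x, p)
  change ‖spatialDensity f x‖ₑ ≤ _ at h
  rw [Real.enorm_of_nonneg (spatialDensity_nonneg hf0 x)] at h
  refine h.trans (le_of_eq (lintegral_congr fun p => ?_))
  exact Real.enorm_of_nonneg (hf0 _)

/-- Pointwise form of the interpolation inequality, with `s` the value of the phase-space density at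
a momentum of modulus `a`. The kinetic term dominates `l s` if `a² > l`, the Casimir term does
if `s ≥ l^k`, and in the remaining case `l s ≤ l^(k+1)`. -/
lemma mul_le_energy_add {k a s l : ℝ} (hk : 0 < k) (hs : 0 ≤ s) (hl : 0 ≤ l) :
    l * s ≤ (a ^ 2 * s + s ^ (1 + 1 / k)) + if a ^ 2 ≤ l then l ^ (k + 1) else 0 := by
  have hsk : 0 ≤ s ^ (1 + 1 / k) := Real.rpow_nonneg hs _
  have has : 0 ≤ a ^ 2 * s := by positivity
  split_ifs with h
  · rcases le_total s (l ^ k) with h1 | h1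
    · have : l * s ≤ l ^ (k + 1) := by
        rw [Real.rpow_add_one' hl (by linarith), mul_comm]
        gcongr
      linarith
    · have h2 : l ≤ s ^ (1 / k) := by
        have := Real.rpow_le_rpow (Real.rpow_nonneg hl k) h1 (show 0 ≤ 1 / k by positivity)
        rwa [← Real.rpow_mul hl, mul_one_div_cancel hk.ne', Real.rpow_one] at this
      have h3 : l * s ≤ s ^ (1 + 1 / k) := by
        rw [Real.rpow_one_add' hs (by positivity), mul_comm]
        gcongr
      have := Real.rpow_nonneg hl (k + 1)
      linarith
  · push Not at h
    have : l * s ≤ a ^ 2 * s := by gcongr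
    linarith

/-- `mul_le_energy_add` integrated over momentum; the last term is `l^(k+1)` times the volume of the
ball of radius `√l`. -/
lemma ofReal_mul_spatialDensity_le {k : ℝ} (hk : 0 < k) {f : V3 × V3 → ℝ} (hf : Measurable f)
    (hf0 : ∀ z, 0 ≤ f z) (x : V3) {l : ℝ} (hl : 0 ≤ l) :
    ENNReal.ofReal (l * spatialDensity f x) ≤
      (∫⁻ p, ENNReal.ofReal (‖p‖ ^ 2 * f (x, p) + f (x, p) ^ (1 + 1 / k))) +
        ENNReal.ofReal ((volume : Measure V3).real (Metric.ball 0 1) * l ^ (k + 3 / 2 + 1)) := by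
  have hball : ∫⁻ p : V3, ENNReal.ofReal (if ‖p‖ ^ 2 ≤ l then l ^ (k + 1) else 0) =
      ENNReal.ofReal ((volume : Measure V3).real (Metric.ball 0 1) * l ^ (k + 3 / 2 + 1)) := by
    have h1 : (fun p : V3 => ENNReal.ofReal (if ‖p‖ ^ 2 ≤ l then l ^ (k + 1) else 0)) =
        (Metric.closedBall (0 : V3) (√l)).indicator fun _ => ENNReal.ofReal (l ^ (k + 1)) := by
      ext p
      have : ‖p‖ ^ 2 ≤ l ↔ p ∈ Metric.closedBall (0 : V3) (√l) := by
        rw [mem_closedBall_zero_iff, Real.le_sqrt (norm_nonneg _) hl]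
      by_cases h : ‖p‖ ^ 2 ≤ l
      · rw [indicator_of_mem (this.1 h), if_pos h]
      · rw [indicator_of_notMem (fun h' => h (this.2 h')), if_neg h, ENNReal.ofReal_zero]
    rw [h1, lintegral_indicator_const measurableSet_closedBall,
      Measure.addHaar_closedBall _ _ (Real.sqrt_nonneg _), ENNReal.ofReal_mul measureReal_nonneg,
      ofReal_measureReal (by exact measure_ball_lt_top.ne), mul_comm (ENNReal.ofReal (√l ^ _)),
      mul_comm, mul_assoc,
      ← ENNReal.ofReal_mul (by positivity)]
    congr 2
    rw [finrank_euclideanSpace, Fintype.card_fin, Real.sqrt_eq_rpow,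
      ← Real.rpow_natCast (l ^ (1 / 2 : ℝ)), ← Real.rpow_mul hl,
      ← Real.rpow_add_of_nonneg hl (by positivity) (by positivity)]
    congr 1
    push_cast; ring
  rw [← hball, ← lintegral_add_left (by fun_prop), ENNReal.ofReal_mul hl]
  refine (mul_le_mul_right (ofReal_spatialDensity_le hf0 x) _).trans ?_
  rw [← lintegral_const_mul _ (by fun_prop)]
  refine lintegral_mono fun p => ?_
  have hs := hf0 (x, p)
  rw [← ENNReal.ofReal_mul hl, ← ENNReal.ofReal_add
    (add_nonneg (by positivity) (Real.rpow_nonneg hs _))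
    (by split_ifs <;> [exact Real.rpow_nonneg hl _; exact le_rfl])]
  exact ENNReal.ofReal_le_ofReal (mul_le_energy_add hk hs hl)

/-- Obtained from `ofReal_mul_spatialDensity_le` with `l = e ρ^(1/n)`, for which both sides scale
like `ρ^(1+1/n)`. -/
lemma exists_spatialDensity_rpow_le {k : ℝ} (hk : 0 < k) :
    ∃ A : ℝ, 0 < A ∧ ∀ f : V3 × V3 → ℝ, Measurable f → (∀ z, 0 ≤ f z) → ∀ x,
      ENNReal.ofReal (spatialDensity f x ^ (1 + 1 / (k + 3 / 2))) ≤
        ENNReal.ofReal A *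
          ∫⁻ p, ENNReal.ofReal (‖p‖ ^ 2 * f (x, p) + f (x, p) ^ (1 + 1 / k)) := by
  set n : ℝ := k + 3 / 2 with hn
  have hn0 : 0 < n := by positivity
  set v : ℝ := (volume : Measure V3).real (Metric.ball 0 1) with hv
  have hv0 : 0 ≤ v := measureReal_nonneg
  -- This `e` makes `v e^n ≤ 1/2`, so that half of `e u^(1+1/n)` absorbs the last term.
  set e : ℝ := (1 / (2 * (v + 1))) ^ (1 / n) with he
  have he0 : 0 < e := by positivity
  have hen : e ^ n = 1 / (2 * (v + 1)) := by
    rw [he, ← Real.rpow_mul (by positivity), one_div_mul_cancel hn0.ne', Real.rpow_one]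
  refine ⟨2 / e, by positivity, fun f hf hf0 x => ?_⟩
  have hu := spatialDensity_nonneg hf0 x
  have h := ofReal_mul_spatialDensity_le hk hf hf0 x
    (l := e * spatialDensity f x ^ (1 / n)) (by positivity)
  rw [← hn, ← hv] at h
  set u := spatialDensity f x
  set G := ∫⁻ p, ENNReal.ofReal (‖p‖ ^ 2 * f (x, p) + f (x, p) ^ (1 + 1 / k))
  have huq : 0 ≤ u ^ (1 + 1 / n) := Real.rpow_nonneg hu _
  have h1 : e * u ^ (1 / n) * u = e * u ^ (1 + 1 / n) := by
    rw [Real.rpow_one_add' hu (by positivity)]; ring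
  have h2 : v * (e * u ^ (1 / n)) ^ (n + 1) ≤ e / 2 * u ^ (1 + 1 / n) := by
    rw [Real.mul_rpow he0.le (by positivity), ← Real.rpow_mul hu, Real.rpow_add_one he0.ne', hen,
      show 1 / n * (n + 1) = 1 + 1 / n by field_simp]
    have h3 : v * (1 / (2 * (v + 1))) ≤ 1 / 2 := by
      rw [mul_one_div, div_le_div_iff₀ (by positivity) (by norm_num)]; linarith
    calc v * (1 / (2 * (v + 1)) * e * u ^ (1 + 1 / n))
        = (v * (1 / (2 * (v + 1)))) * (e * u ^ (1 + 1 / n)) := by ring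
      _ ≤ 1 / 2 * (e * u ^ (1 + 1 / n)) := by gcongr
      _ = _ := by ring
  rw [h1] at h
  have h4 : ENNReal.ofReal (e / 2 * u ^ (1 + 1 / n)) ≤ G := by
    have h5 := h.trans (add_le_add_right (ENNReal.ofReal_le_ofReal h2) _)
    rw [show e * u ^ (1 + 1 / n) = e / 2 * u ^ (1 + 1 / n) + e / 2 * u ^ (1 + 1 / n) by ring,
      ENNReal.ofReal_add (by positivity) (by positivity)] at h5
    exact (ENNReal.add_le_add_iff_right ENNReal.ofReal_ne_top).1 h5
  calc ENNReal.ofReal (u ^ (1 + 1 / n))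
      = ENNReal.ofReal (2 / e) * ENNReal.ofReal (e / 2 * u ^ (1 + 1 / n)) := by
        rw [← ENNReal.ofReal_mul (by positivity)]
        congr 1; field_simp
    _ ≤ _ := by gcongr

lemma lintegral_energyDensity_le {k : ℝ} (hk : 0 < k) {f : V3 × V3 → ℝ} (hf : Measurable f)
    (hf0 : ∀ z, 0 ≤ f z) :
    ∫⁻ z : V3 × V3, ENNReal.ofReal (‖z.2‖ ^ 2 * f z + f z ^ (1 + 1 / k)) ≤
      ENNReal.ofReal (2 + (1 + k) / k) * (EkinL f + CasL k f) := by
  have h1 : ∫⁻ z : V3 × V3, ENNReal.ofReal (‖z.2‖ ^ 2 * f z) = 2 * EkinL f := by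
    rw [EkinL, ← mul_assoc, one_div, ENNReal.mul_inv_cancel (by norm_num) (by norm_num), one_mul]
  have h2 : ∫⁻ z : V3 × V3, ENNReal.ofReal (f z ^ (1 + 1 / k)) =
      ENNReal.ofReal ((1 + k) / k) * CasL k f := by
    unfold CasL PhiFun
    rw [← lintegral_const_mul _ (by fun_prop)]
    refine lintegral_congr fun z => ?_
    rw [← ENNReal.ofReal_mul (by positivity)]
    congr 1; field_simp
  have h3 : ∫⁻ z : V3 × V3, ENNReal.ofReal (‖z.2‖ ^ 2 * f z + f z ^ (1 + 1 / k)) =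
      2 * EkinL f + ENNReal.ofReal ((1 + k) / k) * CasL k f := by
    rw [← h1, ← h2, ← lintegral_add_left (by fun_prop)]
    refine lintegral_congr fun z => ?_
    have := hf0 z
    exact ENNReal.ofReal_add (by positivity) (by positivity)
  rw [h3, mul_add]
  gcongr
  · rw [← ENNReal.ofReal_ofNat]
    exact ENNReal.ofReal_le_ofReal (le_add_of_nonneg_right (by positivity))
  · linarith

/-! ### The bound on the energy–Casimir functional -/

/-- The potential energy is at most half of `E_kin + C`, up to a constant depending only on `k`
and `M`. The assumption `k < 3/2` says `n = k + 3/2 < 3`, that is, `1 + 1/n > 4/3`. -/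
lemma exists_EpotL_le {k M : ℝ} (hk : 0 < k) (hk' : k < 3 / 2) (hM : 0 < M) :
    ∃ C : ℝ, 0 ≤ C ∧ ∀ f ∈ FM k M,
      EpotL f ≤ ENNReal.ofReal (1 / 2) * (EkinL f + CasL k f) + ENNReal.ofReal C := by
  have hq : 4 / 3 < 1 + 1 / (k + 3 / 2) := by
    have : 1 / 3 < 1 / (k + 3 / 2) := one_div_lt_one_div_of_lt (by positivity) (by linarith)
    linarith
  obtain ⟨A, hA, hρ⟩ := exists_spatialDensity_rpow_le hk
  set B : ℝ := 2 + (1 + k) / k with hB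
  have hB0 : 0 < B := by positivity
  obtain ⟨C, hC, hpot⟩ := lintegral_potential_le (η := 1 / (A * B)) hq hM.le (by positivity)
  refine ⟨C, hC, fun f hfM => ?_⟩
  obtain ⟨hf, hf0, hInt, hmass, -⟩ := hfM
  have hρm : Measurable (spatialDensity f) :=
    hf.stronglyMeasurable.integral_prod_right'.measurable
  have hρmass : ∫⁻ x, ENNReal.ofReal (spatialDensity f x) ≤ ENNReal.ofReal M := by
    rw [← hmass, ofReal_integral_eq_lintegral_ofReal hInt (Eventually.of_forall hf0),
      Measure.volume_eq_prod, lintegral_prod _ (by fun_prop)]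
    exact lintegral_mono (ofReal_spatialDensity_le hf0)
  have hI : ∫⁻ x, ENNReal.ofReal (spatialDensity f x ^ (1 + 1 / (k + 3 / 2))) ≤
      ENNReal.ofReal (A * B) * (EkinL f + CasL k f) := by
    refine (lintegral_mono (hρ f hf hf0)).trans ?_
    rw [lintegral_const_mul' _ _ ENNReal.ofReal_ne_top, ENNReal.ofReal_mul hA.le, mul_assoc]
    gcongr
    refine le_trans (le_of_eq ?_) (lintegral_energyDensity_le hk hf hf0)
    rw [Measure.volume_eq_prod, lintegral_prod _ (by fun_prop)]
  calc EpotL f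
      ≤ (1 / 2) * (ENNReal.ofReal (1 / (A * B)) *
          (ENNReal.ofReal (A * B) * (EkinL f + CasL k f)) + ENNReal.ofReal C) := by
        unfold EpotL
        gcongr
        refine (hpot _ hρm (spatialDensity_nonneg hf0) hρmass).trans ?_
        gcongr
    _ = ENNReal.ofReal (1 / 2) * (EkinL f + CasL k f) + (1 / 2) * ENNReal.ofReal C := by
        rw [← mul_assoc (ENNReal.ofReal (1 / (A * B))), ← ENNReal.ofReal_mul (by positivity),
          one_div_mul_cancel (by positivity), ENNReal.ofReal_one, one_mul, mul_add,
          ENNReal.ofReal_div_of_pos (by norm_num), ENNReal.ofReal_one, ENNReal.ofReal_ofNat]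
    _ ≤ _ := by
        gcongr
        exact mul_le_of_le_one_left' (by simp)

/-- Coercivity of the energy–Casimir functional on `F_M`, from which both conclusions follow. -/
lemma exists_energy_le_HC {k M : ℝ} (hk : 0 < k) (hk' : k < 3 / 2) (hM : 0 < M) :
    ∃ C : ℝ, ∀ f ∈ FM k M, (EkinL f + CasL k f).toReal ≤ 2 * HC k f + C := by
  obtain ⟨C, hC, h⟩ := exists_EpotL_le hk hk' hM
  refine ⟨2 * C, fun f hf => ?_⟩
  have hfin := hf.2.2.2.2
  obtain ⟨hE, hCas⟩ := ENNReal.add_lt_top.1 hfin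
  have h1 := ENNReal.toReal_mono (by finiteness) (h f hf)
  rw [ENNReal.toReal_add (by finiteness) (by finiteness), ENNReal.toReal_mul,
    ENNReal.toReal_ofReal (by norm_num), ENNReal.toReal_ofReal hC] at h1
  rw [ENNReal.toReal_add hE.ne hCas.ne] at h1 ⊢
  unfold HC
  linarith

/-- **Lower bound for the energy–Casimir functional and boundedness of
minimizing sequences.**  For `0 < k < 3/2` and `M > 0`, the infimum of `H_C`
over `F_M` is finite, and along any minimizing sequence both the kinetic energy
and the Casimir functional remain bounded. -/
theorem stmt_3 (k M : ℝ) (hk : 0 < k) (hk' : k < 3 / 2) (hM : 0 < M) :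
    BddBelow (HC k '' FM k M) ∧
    ∀ fj : ℕ → (V3 × V3 → ℝ), (∀ j, fj j ∈ FM k M) →
      Tendsto (fun j => HC k (fj j)) atTop (nhds (sInf (HC k '' FM k M))) →
      ∃ B : ℝ≥0∞, B < ⊤ ∧ ∀ j, EkinL (fj j) ≤ B ∧ CasL k (fj j) ≤ B := by
  obtain ⟨C, hC⟩ := exists_energy_le_HC hk hk' hM
  refine ⟨⟨-C / 2, ?_⟩, fun fj hfj hlim => ?_⟩
  · rintro _ ⟨f, hf, rfl⟩
    have h0 : 0 ≤ (EkinL f + CasL k f).toReal := ENNReal.toReal_nonneg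
    linarith [hC f hf]
  · obtain ⟨b, hb⟩ := hlim.bddAbove_range
    have hsum : ∀ j, EkinL (fj j) + CasL k (fj j) ≤ ENNReal.ofReal (2 * b + C) := by
      intro j
      rw [← ENNReal.ofReal_toReal (hfj j).2.2.2.2.ne]
      apply ENNReal.ofReal_le_ofReal
      have : HC k (fj j) ≤ b := hb ⟨j, rfl⟩
      linarith [hC (fj j) (hfj j)]
    exact ⟨ENNReal.ofReal (2 * b + C), ENNReal.ofReal_lt_top,
      fun j => ⟨le_self_add.trans (hsum j), le_add_self.trans (hsum j)⟩⟩
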